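/- Let 𝓐, 𝓔 ∈ ℂ^{(N+M)×(N+M)} and partition 𝓐 = [𝓐₁ 𝓐₂], 𝓔 = [𝓔₁ 𝓔₂] with 𝓐₁, 𝓔₁ ∈ ℂ^{(N+M)×N} and 𝓐₂, 𝓔₂ ∈ ℂ^{(N+M)×M}. Then there exists an invertible matrix Q ∈ ℂ^{(N+M)×(N+M)} such that Q(𝓐 − s𝓔) is in SSF-I (hence has the same eigenvalues and right deflating subspaces as 𝓐 − s𝓔) if and only if the matrix [𝓔₁ 𝓐₂] is nonsingular; in that case Q = [𝓔₁ 𝓐₂]^{−1} and the SSF-I blocks are given by [[E, −G], [−H, F]] = [𝓔₁ 𝓐₂]^{−1} [𝓐₁ 𝓔₂]. -/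

import Mathlib

open Matrix

/-!
Left multiplication by `Q` acts on each block column separately, so the two requirements that
`Q𝓐` and `Q𝓔` have SSF-I shape can be regrouped by exchanging columns: the prescribed columns
say `Q [𝓔₁ 𝓐₂] = 1`, and the free ones say `Q [𝓐₁ 𝓔₂] = [[E, -G], [-H, F]]`. The first equation
forces `Q = [𝓔₁ 𝓐₂]⁻¹`, and the second then merely names the blocks.
-/

theorem exists_fromBlocks_neg_eq {R l m n o : Type*} [InvolutiveNeg R]
    (X : Matrix (n ⊕ o) (l ⊕ m) R) :
    ∃ (E : Matrix n l R) (F : Matrix o m R) (G : Matrix n m R) (H : Matrix o l R),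
      fromBlocks E (-G) (-H) F = X :=
  ⟨X.toBlocks₁₁, X.toBlocks₂₂, -X.toBlocks₁₂, -X.toBlocks₂₁, by
    rw [neg_neg, neg_neg, fromBlocks_toBlocks]⟩

section SSF1

variable {R m n : Type*} [DecidableEq m] [DecidableEq n]

/-- The pencil `𝓐 - s𝓔` is in standard symplectic-like form I with blocks `E`, `F`, `G`, `H`.
A pencil is encoded as its pair of coefficient matrices. -/
def IsSSF1 [Zero R] [One R] [Neg R] (𝓐 𝓔 : Matrix (n ⊕ m) (n ⊕ m) R)
    (E : Matrix n n R) (F : Matrix m m R) (G : Matrix n m R) (H : Matrix m n R) : Prop :=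
  𝓐 = fromBlocks E 0 (-H) 1 ∧ 𝓔 = fromBlocks 1 (-G) 0 F

variable [Fintype m] [Fintype n]

theorem isSSF1_mul_iff [Ring R] {Q : Matrix (n ⊕ m) (n ⊕ m) R}
    {𝓐₁ 𝓔₁ : Matrix (n ⊕ m) n R} {𝓐₂ 𝓔₂ : Matrix (n ⊕ m) m R}
    {E : Matrix n n R} {F : Matrix m m R} {G : Matrix n m R} {H : Matrix m n R} :
    IsSSF1 (Q * fromCols 𝓐₁ 𝓐₂) (Q * fromCols 𝓔₁ 𝓔₂) E F G H ↔
      Q * fromCols 𝓔₁ 𝓐₂ = 1 ∧ Q * fromCols 𝓐₁ 𝓔₂ = fromBlocks E (-G) (-H) F := by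
  simp only [IsSSF1, ← fromBlocks_one, ← fromCols_fromRows_eq_fromBlocks, mul_fromCols,
    fromCols_inj.eq_iff]
  tauto

theorem isSSF1_mul_iff_eq_inv [CommRing R] {Q : Matrix (n ⊕ m) (n ⊕ m) R}
    {𝓐₁ 𝓔₁ : Matrix (n ⊕ m) n R} {𝓐₂ 𝓔₂ : Matrix (n ⊕ m) m R}
    {E : Matrix n n R} {F : Matrix m m R} {G : Matrix n m R} {H : Matrix m n R} :
    IsSSF1 (Q * fromCols 𝓐₁ 𝓐₂) (Q * fromCols 𝓔₁ 𝓔₂) E F G H ↔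
      IsUnit (fromCols 𝓔₁ 𝓐₂) ∧ Q = (fromCols 𝓔₁ 𝓐₂)⁻¹ ∧
        fromBlocks E (-G) (-H) F = (fromCols 𝓔₁ 𝓐₂)⁻¹ * fromCols 𝓐₁ 𝓔₂ := by
  rw [isSSF1_mul_iff]
  constructor
  · rintro ⟨left_inv, blocks⟩
    have Q_eq : Q = (fromCols 𝓔₁ 𝓐₂)⁻¹ := (inv_eq_left_inv left_inv).symm
    exact ⟨.of_mul_eq_one_right Q left_inv, Q_eq, Q_eq ▸ blocks.symm⟩
  · rintro ⟨unit, rfl, blocks⟩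
    exact ⟨nonsing_inv_mul _ ((isUnit_iff_isUnit_det _).mp unit), blocks.symm⟩

theorem ssf1_transformation_general [CommRing R]
    (𝓐₁ 𝓔₁ : Matrix (n ⊕ m) n R) (𝓐₂ 𝓔₂ : Matrix (n ⊕ m) m R) :
    ((∃ Q : Matrix (n ⊕ m) (n ⊕ m) R, IsUnit Q ∧
        ∃ E F G H, IsSSF1 (Q * fromCols 𝓐₁ 𝓐₂) (Q * fromCols 𝓔₁ 𝓔₂) E F G H) ↔
      IsUnit (fromCols 𝓔₁ 𝓐₂)) ∧
    (IsUnit (fromCols 𝓔₁ 𝓐₂) →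
      ∃ E F G H, fromBlocks E (-G) (-H) F = (fromCols 𝓔₁ 𝓐₂)⁻¹ * fromCols 𝓐₁ 𝓔₂ ∧
        IsSSF1 ((fromCols 𝓔₁ 𝓐₂)⁻¹ * fromCols 𝓐₁ 𝓐₂)
          ((fromCols 𝓔₁ 𝓐₂)⁻¹ * fromCols 𝓔₁ 𝓔₂) E F G H) := by
  obtain ⟨E, F, G, H, blocks⟩ :=
    exists_fromBlocks_neg_eq ((fromCols 𝓔₁ 𝓐₂)⁻¹ * fromCols 𝓐₁ 𝓔₂)
  have isSSF1_inv (unit : IsUnit (fromCols 𝓔₁ 𝓐₂)) :=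
    isSSF1_mul_iff_eq_inv.mpr ⟨unit, rfl, blocks⟩
  refine ⟨⟨?_, fun unit ↦ ?_⟩, fun unit ↦ ⟨E, F, G, H, blocks, isSSF1_inv unit⟩⟩
  · rintro ⟨Q, -, E, F, G, H, ssf1⟩
    exact (isSSF1_mul_iff_eq_inv.mp ssf1).1
  · exact ⟨_, isUnit_nonsing_inv_iff.mpr unit, E, F, G, H, isSSF1_inv unit⟩

end SSF1

/-- A pencil `𝓐 − s𝓔 = [𝓐₁ 𝓐₂] − s[𝓔₁ 𝓔₂]` can be brought into SSF-I by left
multiplication with an invertible matrix `Q` if and only if `[𝓔₁ 𝓐₂]` is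
nonsingular, in which case `Q = [𝓔₁ 𝓐₂]⁻¹` works and the SSF-I blocks are given by
`[[E, −G], [−H, F]] = [𝓔₁ 𝓐₂]⁻¹ [𝓐₁ 𝓔₂]`. -/
theorem ssf1_transformation
    (N M : ℕ)
    (𝓐₁ 𝓔₁ : Matrix (Fin N ⊕ Fin M) (Fin N) ℂ)
    (𝓐₂ 𝓔₂ : Matrix (Fin N ⊕ Fin M) (Fin M) ℂ) :
    ((∃ Q : Matrix (Fin N ⊕ Fin M) (Fin N ⊕ Fin M) ℂ, IsUnit Q ∧
        ∃ (E : Matrix (Fin N) (Fin N) ℂ) (F : Matrix (Fin M) (Fin M) ℂ)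
          (G : Matrix (Fin N) (Fin M) ℂ) (H : Matrix (Fin M) (Fin N) ℂ),
          Q * fromCols 𝓐₁ 𝓐₂ =
              fromBlocks E (0 : Matrix (Fin N) (Fin M) ℂ) (-H)
                (1 : Matrix (Fin M) (Fin M) ℂ) ∧
            Q * fromCols 𝓔₁ 𝓔₂ =
              fromBlocks (1 : Matrix (Fin N) (Fin N) ℂ) (-G)
                (0 : Matrix (Fin M) (Fin N) ℂ) F) ↔
      IsUnit (fromCols 𝓔₁ 𝓐₂)) ∧
    (IsUnit (fromCols 𝓔₁ 𝓐₂) →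
      ∃ (E : Matrix (Fin N) (Fin N) ℂ) (F : Matrix (Fin M) (Fin M) ℂ)
        (G : Matrix (Fin N) (Fin M) ℂ) (H : Matrix (Fin M) (Fin N) ℂ),
        fromBlocks E (-G) (-H) F =
            (fromCols 𝓔₁ 𝓐₂)⁻¹ * fromCols 𝓐₁ 𝓔₂ ∧
          (fromCols 𝓔₁ 𝓐₂)⁻¹ * fromCols 𝓐₁ 𝓐₂ =
            fromBlocks E (0 : Matrix (Fin N) (Fin M) ℂ) (-H)
              (1 : Matrix (Fin M) (Fin M) ℂ) ∧
          (fromCols 𝓔₁ 𝓐₂)⁻¹ * fromCols 𝓔₁ 𝓔₂ =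
            fromBlocks (1 : Matrix (Fin N) (Fin N) ℂ) (-G)
              (0 : Matrix (Fin M) (Fin N) ℂ) F) :=
  ssf1_transformation_general 𝓐₁ 𝓔₁ 𝓐₂ 𝓔₂
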